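/- Consider the relaxed regulator's problem in which the budget constraint is weakened to the inequality ∫₀^ū ∫₀^ᾱ f(α) g(u) r(u) a(α,u) dα du ≥ K·∫₀^ū ∫₀^ᾱ f(α) g(u) c(α,u) dα du, all other constraints and the objective being unchanged. If K ≥ K_low, then the budget constraint holds with equality at an optimal solution of the relaxed problem. -/

import Mathlib

open MeasureTheory Set

noncomputable section

namespace Spectrum

/-- The CDF associated with a density via `F x = ∫ s in 0..x, f s`. -/
def CDF (f : ℝ → ℝ) (x : ℝ) : ℝ := ∫ s in (0:ℝ)..x, f s

/-- `r u = (1 - G u) / g u - u`. -/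
def rFun (g : ℝ → ℝ) (u : ℝ) : ℝ := (1 - CDF g u) / g u - u

/-- The lower threshold `K_low` on the cost of inspection. -/
def Klow (f g : ℝ → ℝ) (αstar : ℝ → ℝ) (v : ℝ) : ℝ :=
  (∫ u in (0:ℝ)..v, (1 - CDF f (αstar u)) * (1 - CDF g u - u * g u)) /
  (∫ u in (0:ℝ)..v, (1 - CDF f (αstar u)) * g u)

/-- `f` is a continuous, strictly positive probability density on `[0, b]`. -/
structure IsDensityOn (f : ℝ → ℝ) (b : ℝ) : Prop where
  cont : ContinuousOn f (Icc 0 b)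
  pos : ∀ x ∈ Icc (0:ℝ) b, 0 < f x
  supp : ∀ x, x ∉ Icc (0:ℝ) b → f x = 0
  int_one : (∫ x in (0:ℝ)..b, f x) = 1

/-- The regulator's objective. -/
def J (abar ubar v : ℝ) (f g : ℝ → ℝ) (t : ℝ → ℝ → ℝ) (a : ℝ → ℝ → ℝ) : ℝ :=
  ∫ u in (0:ℝ)..ubar, ∫ α in (0:ℝ)..abar, f α * g u * (min v (t α u) - u) * a α u

/-- Feasibility of an allocation/inspection pair for the regulator's problem. -/
structure Feasible (abar ubar K : ℝ) (f g : ℝ → ℝ) (a c : ℝ → ℝ → ℝ) : Prop where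
  meas_a : Measurable (Function.uncurry a)
  meas_c : Measurable (Function.uncurry c)
  mem_a : ∀ α u, a α u ∈ Icc (0:ℝ) 1
  mem_c : ∀ α u, c α u ∈ Icc (0:ℝ) 1
  budget : (∫ u in (0:ℝ)..ubar, ∫ α in (0:ℝ)..abar, f α * g u * rFun g u * a α u)
      = K * ∫ u in (0:ℝ)..ubar, ∫ α in (0:ℝ)..abar, f α * g u * c α u
  ic : ∀ α u, a α u * (1 - c α u) ≤ a 0 u
  inspect : ∀ α u, c α u ≤ a α u
  u_mono : ∀ α u u', u' ≤ u → a α u ≤ a α u'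
  α_mono0 : ∀ α u, a 0 u ≤ a α u

/-- Optimality for the regulator's problem. -/
def Optimal (abar ubar v K : ℝ) (f g : ℝ → ℝ) (t : ℝ → ℝ → ℝ) (a c : ℝ → ℝ → ℝ) : Prop :=
  Feasible abar ubar K f g a c ∧
  ∀ a' c' : ℝ → ℝ → ℝ, Feasible abar ubar K f g a' c' →
    J abar ubar v f g t a' ≤ J abar ubar v f g t a

/-- The interference is `t(α,u) = α` (independent case, with `α*(u) = u`)
or `t(α,u) = α·u` (power case, with `α*(u) = 1`). -/
def InterferenceSpec (t : ℝ → ℝ → ℝ) (αstar : ℝ → ℝ) : Prop :=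
  ((∀ α u, t α u = α) ∧ (∀ u, αstar u = u)) ∨
  ((∀ α u, t α u = α * u) ∧ (∀ u, αstar u = 1))

/-- Feasibility for the relaxed problem where the budget constraint is an inequality. -/
structure FeasibleRelaxed (abar ubar K : ℝ) (f g : ℝ → ℝ) (a c : ℝ → ℝ → ℝ) : Prop where
  meas_a : Measurable (Function.uncurry a)
  meas_c : Measurable (Function.uncurry c)
  mem_a : ∀ α u, a α u ∈ Icc (0:ℝ) 1
  mem_c : ∀ α u, c α u ∈ Icc (0:ℝ) 1
  budget : (∫ u in (0:ℝ)..ubar, ∫ α in (0:ℝ)..abar, f α * g u * rFun g u * a α u)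
      ≥ K * ∫ u in (0:ℝ)..ubar, ∫ α in (0:ℝ)..abar, f α * g u * c α u
  ic : ∀ α u, a α u * (1 - c α u) ≤ a 0 u
  inspect : ∀ α u, c α u ≤ a α u
  u_mono : ∀ α u u', u' ≤ u → a α u ≤ a α u'
  α_mono0 : ∀ α u, a 0 u ≤ a α u

/-- Optimality for the relaxed problem. -/
def OptimalRelaxed (abar ubar v K : ℝ) (f g : ℝ → ℝ) (t : ℝ → ℝ → ℝ)
    (a c : ℝ → ℝ → ℝ) : Prop :=
  FeasibleRelaxed abar ubar K f g a c ∧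
  ∀ a' c' : ℝ → ℝ → ℝ, FeasibleRelaxed abar ubar K f g a' c' →
    J abar ubar v f g t a' ≤ J abar ubar v f g t a

/-!
Suppose an optimal pair `(a, c)` left a budget surplus. Deform it continuously, through rules that
satisfy every constraint but the budget, first to the rule that allocates fully on the first-best
region and keeps `a 0` elsewhere, then to the rule that allocates exactly on the first-best region.
Each step raises the objective strictly unless it leaves the allocation unchanged almost everywhere,
and the rules are inspected so little that in the latter case the surplus cannot fall. By optimality
the surplus along the deformation is thus never in `[0, surplus of (a, c))`; by continuity it stays
positive to the end, where it is the integral of `rFun g - K` over the first-best region.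
But `Klow` is the mean of `rFun g` over that region, so `Klow ≤ K` makes this integral nonpositive.
-/

section Law

/-- The law on `ℝ` of a real type with density `f`. -/
def law (f : ℝ → ℝ) : Measure ℝ := volume.withDensity fun x => ENNReal.ofReal (f x)

instance (f : ℝ → ℝ) : SFinite (law f) :=
  inferInstanceAs (SFinite (volume.withDensity fun x => ENNReal.ofReal (f x)))

instance (f : ℝ → ℝ) : NullSingletonClass (law f) :=
  inferInstanceAs (NullSingletonClass (volume.withDensity fun x => ENNReal.ofReal (f x)))

namespace IsDensityOn

variable {f : ℝ → ℝ} {b s : ℝ}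

lemma nonneg (hf : IsDensityOn f b) (x : ℝ) : 0 ≤ f x := by
  by_cases hx : x ∈ Icc 0 b
  · exact (hf.pos x hx).le
  · exact (hf.supp x hx).ge

lemma integrable (hf : IsDensityOn f b) : Integrable f :=
  (integrableOn_iff_integrable_of_support_subset fun _ => not_imp_comm.1 (hf.supp _)).1
    (hf.cont.integrableOn_compact isCompact_Icc)

lemma bound_pos (hf : IsDensityOn f b) : 0 < b := by
  by_contra! hb
  have hzero : f =ᵐ[volume] 0 := by
    filter_upwards [Measure.ae_ne volume (0 : ℝ)] with x hx
    exact hf.supp x fun h => hx (le_antisymm (h.2.trans hb) h.1)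
  have hint := hf.int_one
  rw [intervalIntegral.integral_zero_ae (hzero.mono fun _ h _ => h)] at hint
  exact zero_ne_one hint

lemma aemeasurable_ofReal (hf : IsDensityOn f b) :
    AEMeasurable (fun x => ENNReal.ofReal (f x)) volume :=
  hf.integrable.aemeasurable.ennreal_ofReal

lemma ae_law_iff (hf : IsDensityOn f b) {p : ℝ → Prop} :
    (∀ᵐ x ∂law f, p x) ↔ ∀ᵐ x, f x ≠ 0 → p x := by
  simp only [law, ae_withDensity_iff' hf.aemeasurable_ofReal, ne_eq, ENNReal.ofReal_eq_zero,
    (hf.nonneg _).ge_iff_eq']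

lemma ae_mem_Ioc (hf : IsDensityOn f b) : ∀ᵐ x ∂law f, x ∈ Ioc 0 b := by
  filter_upwards [Measure.ae_ne (law f) 0,
    hf.ae_law_iff.2 (Filter.Eventually.of_forall fun _ => not_imp_comm.1 (hf.supp _))]
    with x hx hmem using ⟨hmem.1.lt_of_ne' hx, hmem.2⟩

lemma frequently_lt (hf : IsDensityOn f b) (hs : 0 < s) : ∃ᵐ x ∂law f, x < s := by
  intro h
  have hnull : volume (Ioo 0 (min b s)) = 0 := by
    refine measure_mono_null (fun x hx => ?_) (ae_iff.1 (hf.ae_law_iff.1 h))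
    have hxb := hx.2.trans_le (min_le_left b s)
    exact fun hxs => hxs (hf.pos x ⟨hx.1.le, hxb.le⟩).ne' (hx.2.trans_le (min_le_right b s))
  simp only [Real.volume_Ioo, sub_zero, ENNReal.ofReal_eq_zero] at hnull
  exact hnull.not_gt (lt_min hf.bound_pos hs)

lemma setIntegral_law_Iic (hf : IsDensityOn f b) (hs : 0 ≤ s) (h : ℝ → ℝ) :
    ∫ x in Iic s, h x ∂law f = ∫ x in (0 : ℝ)..s, f x * h x := by
  have hdens : ∫ x in Iic s, h x ∂law f = ∫ x in Iic s, f x * h x := by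
    rw [law, setIntegral_withDensity_eq_setIntegral_toReal_smul₀ hf.aemeasurable_ofReal.restrict
      (by simp) _ measurableSet_Iic]
    simp only [ENNReal.toReal_ofReal (hf.nonneg _), smul_eq_mul]
  rw [hdens, intervalIntegral.integral_of_le hs]
  refine setIntegral_eq_of_subset_of_ae_sdiff_eq_zero measurableSet_Iic.nullMeasurableSet
    Ioc_subset_Iic_self ?_
  filter_upwards [Measure.ae_ne volume (0 : ℝ)] with x hx hxs
  rw [hf.supp x fun hmem => hxs.2 ⟨hmem.1.lt_of_ne' hx, hxs.1⟩, zero_mul]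

lemma integral_law (hf : IsDensityOn f b) (h : ℝ → ℝ) :
    ∫ x, h x ∂law f = ∫ x in (0 : ℝ)..b, f x * h x := by
  rw [← hf.setIntegral_law_Iic hf.bound_pos.le,
    Measure.restrict_eq_self_of_ae_mem (s := Iic b) (hf.ae_mem_Ioc.mono fun _ hx => hx.2)]

lemma isProbabilityMeasure_law (hf : IsDensityOn f b) : IsProbabilityMeasure (law f) := by
  have : IsFiniteMeasure (law f) := isFiniteMeasure_withDensity_ofReal hf.integrable.2
  refine ⟨(ENNReal.toReal_eq_one_iff _).1 ?_⟩
  simpa [measureReal_def, hf.int_one] using hf.integral_law fun _ => 1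

lemma one_sub_CDF (hf : IsDensityOn f b) (hs : 0 ≤ s) :
    1 - CDF f s = (law f).real (Ioi s) := by
  have := hf.isProbabilityMeasure_law
  have hcdf : CDF f s = (law f).real (Iic s) := by
    simpa [CDF] using (hf.setIntegral_law_Iic hs fun _ => 1).symm
  rw [hcdf, ← compl_Iic, probReal_compl_eq_one_sub measurableSet_Iic]

-- Beyond the support, `rFun` divides by zero, but both sides vanish.
lemma mul_rFun (hf : IsDensityOn f b) (hs : 0 ≤ s) :
    f s * rFun f s = 1 - CDF f s - s * f s := by
  rcases le_or_gt s b with hsb | hbs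
  · rw [rFun]
    field_simp [(hf.pos s ⟨hs, hsb⟩).ne']
  · have htail : (law f).real (Ioi s) = 0 := by
      rw [measureReal_def, measure_eq_zero_iff_ae_notMem.2, ENNReal.toReal_zero]
      filter_upwards [hf.ae_mem_Ioc] with x hx using (hx.2.trans hbs.le).not_gt
    rw [hf.one_sub_CDF hs, htail, hf.supp s fun h => h.2.not_gt hbs]
    ring

lemma continuousOn_rFun (hf : IsDensityOn f b) : ContinuousOn (rFun f) (Icc 0 b) := by
  have hcdf : Continuous (CDF f) :=
    intervalIntegral.continuous_primitive (fun _ _ => hf.integrable.intervalIntegrable) 0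
  exact ((continuousOn_const.sub hcdf.continuousOn).div hf.cont
    fun x hx => (hf.pos x hx).ne').sub continuousOn_id

end IsDensityOn

end Law

section Types

/-- The joint law of the types, with pairs ordered `(u, α)` as in the iterated integrals. -/
abbrev typeLaw (f g : ℝ → ℝ) : Measure (ℝ × ℝ) := (law g).prod (law f)

variable {abar ubar : ℝ} {f g : ℝ → ℝ} {W : ℝ × ℝ → ℝ}

lemma ae_typeLaw_mem (hf : IsDensityOn f abar) (hg : IsDensityOn g ubar) :
    ∀ᵐ p ∂typeLaw f g, p ∈ Ioc 0 ubar ×ˢ Ioc 0 abar := by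
  filter_upwards [Measure.quasiMeasurePreserving_fst.ae hg.ae_mem_Ioc,
    Measure.quasiMeasurePreserving_snd.ae hf.ae_mem_Ioc] with p hu hα using ⟨hu, hα⟩

lemma integrable_typeLaw_of_continuousOn (hf : IsDensityOn f abar) (hg : IsDensityOn g ubar)
    (hW : ContinuousOn W (Icc 0 ubar ×ˢ Icc 0 abar)) : Integrable W (typeLaw f g) := by
  have := hf.isProbabilityMeasure_law
  have := hg.isProbabilityMeasure_law
  rw [← Measure.restrict_eq_self_of_ae_mem ((ae_typeLaw_mem hf hg).mono fun _ hp =>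
    prod_mono Ioc_subset_Icc_self Ioc_subset_Icc_self hp)]
  exact hW.integrableOn_compact (isCompact_Icc.prod isCompact_Icc)

lemma integral_typeLaw (hf : IsDensityOn f abar) (hg : IsDensityOn g ubar)
    (hW : Integrable W (typeLaw f g)) :
    ∫ p, W p ∂typeLaw f g
      = ∫ u in (0 : ℝ)..ubar, ∫ α in (0 : ℝ)..abar, f α * g u * W (u, α) := by
  rw [integral_prod _ hW, hg.integral_law]
  simp only [hf.integral_law, ← intervalIntegral.integral_const_mul, mul_left_comm, mul_assoc]

lemma integrable_mul_of_mem_Icc {Ω : Type*} [MeasurableSpace Ω] {μ : Measure Ω} {W b : Ω → ℝ}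
    (hW : Integrable W μ) (hb : Measurable b) (hmem : ∀ ω, b ω ∈ Icc (0 : ℝ) 1) :
    Integrable (fun ω => W ω * b ω) μ :=
  hW.mul_bdd hb.aestronglyMeasurable (Filter.Eventually.of_forall fun ω => by
    rw [Real.norm_of_nonneg (hmem ω).1]
    exact (hmem ω).2)

lemma integrable_rFun (hf : IsDensityOn f abar) (hg : IsDensityOn g ubar) :
    Integrable (fun p : ℝ × ℝ => rFun g p.1) (typeLaw f g) :=
  integrable_typeLaw_of_continuousOn hf hg
    (hg.continuousOn_rFun.comp continuousOn_fst fun _ hp => hp.1)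

end Types

/-- The constraints shared by all versions of the regulator's problem: everything in
`FeasibleRelaxed` except the budget. -/
structure Admissible (a c : ℝ → ℝ → ℝ) : Prop where
  meas_a : Measurable (Function.uncurry a)
  meas_c : Measurable (Function.uncurry c)
  mem_a : ∀ α u, a α u ∈ Icc (0 : ℝ) 1
  mem_c : ∀ α u, c α u ∈ Icc (0 : ℝ) 1
  ic : ∀ α u, a α u * (1 - c α u) ≤ a 0 u
  inspect : ∀ α u, c α u ≤ a α u
  u_mono : ∀ α u u', u' ≤ u → a α u ≤ a α u'
  α_mono0 : ∀ α u, a 0 u ≤ a α u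

/-- The budget surplus: expected revenue net of expected inspection costs. -/
def surplus (K : ℝ) (f g : ℝ → ℝ) (a c : ℝ → ℝ → ℝ) : ℝ :=
  ∫ p, (rFun g p.1 * a p.2 p.1 - K * c p.2 p.1) ∂typeLaw f g

section Surplus

variable {abar ubar K : ℝ} {f g : ℝ → ℝ} {a c a' c' : ℝ → ℝ → ℝ}

lemma Admissible.integrable_revenue (h : Admissible a c) (hf : IsDensityOn f abar)
    (hg : IsDensityOn g ubar) :
    Integrable (fun p : ℝ × ℝ => rFun g p.1 * a p.2 p.1) (typeLaw f g) :=
  integrable_mul_of_mem_Icc (integrable_rFun hf hg) (h.meas_a.comp measurable_swap)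
    fun _ => h.mem_a _ _

lemma Admissible.integrable_inspection (h : Admissible a c) (hf : IsDensityOn f abar)
    (hg : IsDensityOn g ubar) : Integrable (fun p : ℝ × ℝ => c p.2 p.1) (typeLaw f g) := by
  simpa only [one_mul] using integrable_mul_of_mem_Icc (b := fun p : ℝ × ℝ => c p.2 p.1)
    (integrable_typeLaw_of_continuousOn hf hg (continuousOn_const (c := 1)))
    (h.meas_c.comp measurable_swap) fun _ => h.mem_c _ _

lemma Admissible.integrable_surplus (h : Admissible a c) (hf : IsDensityOn f abar)
    (hg : IsDensityOn g ubar) (K : ℝ) :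
    Integrable (fun p : ℝ × ℝ => rFun g p.1 * a p.2 p.1 - K * c p.2 p.1) (typeLaw f g) :=
  (h.integrable_revenue hf hg).sub ((h.integrable_inspection hf hg).const_mul K)

lemma Admissible.norm_sub_le (h : Admissible a c) (r K α u : ℝ) :
    ‖r * a α u - K * c α u‖ ≤ |r| + |K| := by
  have ha : |r * a α u| ≤ |r| := by
    rw [abs_mul, abs_of_nonneg (h.mem_a α u).1]
    exact mul_le_of_le_one_right (abs_nonneg r) (h.mem_a α u).2
  have hc : |K * c α u| ≤ |K| := by
    rw [abs_mul, abs_of_nonneg (h.mem_c α u).1]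
    exact mul_le_of_le_one_right (abs_nonneg K) (h.mem_c α u).2
  exact (abs_sub _ _).trans (add_le_add ha hc)

lemma Admissible.surplus_eq (h : Admissible a c) (hf : IsDensityOn f abar)
    (hg : IsDensityOn g ubar) :
    surplus K f g a c
      = (∫ u in (0 : ℝ)..ubar, ∫ α in (0 : ℝ)..abar, f α * g u * rFun g u * a α u)
        - K * ∫ u in (0 : ℝ)..ubar, ∫ α in (0 : ℝ)..abar, f α * g u * c α u := by
  have hrev := h.integrable_revenue hf hg
  have hins := h.integrable_inspection hf hg
  rw [surplus, integral_sub hrev (hins.const_mul K), integral_const_mul,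
    integral_typeLaw hf hg hrev, integral_typeLaw hf hg hins]
  simp only [mul_assoc]

lemma feasibleRelaxed_iff (hf : IsDensityOn f abar) (hg : IsDensityOn g ubar) :
    FeasibleRelaxed abar ubar K f g a c ↔ Admissible a c ∧ 0 ≤ surplus K f g a c := by
  refine ⟨fun h => ?_, fun ⟨h, hs⟩ => ?_⟩
  · have hadm : Admissible a c :=
      ⟨h.meas_a, h.meas_c, h.mem_a, h.mem_c, h.ic, h.inspect, h.u_mono, h.α_mono0⟩
    exact ⟨hadm, by rw [hadm.surplus_eq hf hg]; exact sub_nonneg.2 h.budget⟩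
  · rw [h.surplus_eq hf hg] at hs
    exact ⟨h.meas_a, h.meas_c, h.mem_a, h.mem_c, sub_nonneg.1 hs, h.ic, h.inspect, h.u_mono,
      h.α_mono0⟩

lemma surplus_le_of_ae (hf : IsDensityOn f abar) (hg : IsDensityOn g ubar) (hK : 0 ≤ K)
    (h : Admissible a c) (h' : Admissible a' c')
    (ha : ∀ᵐ p ∂typeLaw f g, a' p.2 p.1 = a p.2 p.1)
    (hc : ∀ᵐ p ∂typeLaw f g, c' p.2 p.1 ≤ c p.2 p.1) :
    surplus K f g a c ≤ surplus K f g a' c' := by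
  refine integral_mono_ae (h.integrable_surplus hf hg K) (h'.integrable_surplus hf hg K) ?_
  filter_upwards [ha, hc] with p hap hcp
  simp only [hap]
  gcongr

lemma continuousOn_surplus (hf : IsDensityOn f abar) (hg : IsDensityOn g ubar)
    {A C : ℝ → ℝ → ℝ → ℝ} {S : Set ℝ} (hadm : ∀ s ∈ S, Admissible (A s) (C s))
    (hcont : ∀ s ∈ S, ∀ᵐ p ∂typeLaw f g,
      ContinuousWithinAt (fun s => A s p.2 p.1) S s ∧
        ContinuousWithinAt (fun s => C s p.2 p.1) S s) :
    ContinuousOn (fun s => surplus K f g (A s) (C s)) S := by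
  have := hf.isProbabilityMeasure_law
  have := hg.isProbabilityMeasure_law
  intro s hs
  have hbound : Integrable (fun p : ℝ × ℝ => |rFun g p.1| + |K|) (typeLaw f g) :=
    (integrable_rFun hf hg).abs.add (integrable_const _)
  unfold surplus
  refine continuousWithinAt_of_dominated ?_ ?_ hbound ?_
  · exact eventually_mem_nhdsWithin.mono fun s hs =>
      ((hadm s hs).integrable_surplus hf hg K).aestronglyMeasurable
  · exact eventually_mem_nhdsWithin.mono fun s hs =>
      Filter.Eventually.of_forall fun p => (hadm s hs).norm_sub_le _ _ _ _
  · exact (hcont s hs).mono fun p hp => (hp.1.const_mul _).sub (hp.2.const_mul _)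

end Surplus

/-- `αstar u` is the type `α` at which the interference `t α u` crosses `u` from below; both cases
of `InterferenceSpec` are of this form. -/
structure IsCutoff (t : ℝ → ℝ → ℝ) (αstar : ℝ → ℝ) : Prop where
  continuous : Continuous (Function.uncurry t)
  monotone : Monotone αstar
  pos : ∀ u, 0 < u → 0 < αstar u
  lt_interference : ∀ α u, 0 < u → αstar u < α → u < t α u
  interference_lt : ∀ α u, 0 < u → α < αstar u → t α u < u

lemma InterferenceSpec.isCutoff {t : ℝ → ℝ → ℝ} {αstar : ℝ → ℝ} (ht : InterferenceSpec t αstar) :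
    IsCutoff t αstar := by
  rcases ht with ⟨ht, hα⟩ | ⟨ht, hα⟩
  · obtain rfl : t = fun α _ => α := funext₂ ht
    obtain rfl : αstar = id := funext hα
    exact ⟨continuous_fst, monotone_id, fun _ h => h, fun _ _ _ h => h, fun _ _ _ h => h⟩
  · obtain rfl : t = fun α u => α * u := funext₂ ht
    obtain rfl : αstar = fun _ => 1 := funext hα
    exact ⟨continuous_mul, monotone_const, fun _ _ => one_pos,
      fun _ _ => lt_mul_of_one_lt_left, fun _ _ => mul_lt_of_lt_one_left⟩

/-- The pairs `(u, α)` at which allocating is efficient. Type `α = 0` is excluded explicitly, since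
`αstar u` may be negative for the irrelevant `u < 0`. -/
def firstBest (αstar : ℝ → ℝ) (v : ℝ) : Set (ℝ × ℝ) :=
  {p | 0 < p.2 ∧ αstar p.1 < p.2 ∧ p.1 ≤ v}

section FirstBest

variable {abar ubar v : ℝ} {f g : ℝ → ℝ} {t a a' : ℝ → ℝ → ℝ} {αstar : ℝ → ℝ}

lemma zero_notMem_firstBest (αstar : ℝ → ℝ) (v u : ℝ) : (u, (0 : ℝ)) ∉ firstBest αstar v :=
  fun h => h.1.false

lemma firstBest_of_le (hα : Monotone αstar) {α u u' : ℝ} (hu : u' ≤ u)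
    (h : (u, α) ∈ firstBest αstar v) : (u', α) ∈ firstBest αstar v :=
  ⟨h.1, (hα hu).trans_lt h.2.1, hu.trans h.2.2⟩

lemma measurableSet_firstBest (hα : Measurable αstar) (v : ℝ) :
    MeasurableSet (firstBest αstar v) :=
  (measurableSet_lt measurable_const measurable_snd).inter
    ((measurableSet_lt (hα.comp measurable_fst) measurable_snd).inter
      (measurableSet_le measurable_fst measurable_const))

lemma ae_ne_cutoff (f g : ℝ → ℝ) (hα : Measurable αstar) :
    ∀ᵐ p ∂typeLaw f g, p.2 ≠ αstar p.1 :=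
  (Measure.ae_prod_iff_ae_ae (p := fun p : ℝ × ℝ => p.2 ≠ αstar p.1)
    (measurableSet_eq_fun measurable_snd (hα.comp measurable_fst)).compl).2
    (Filter.Eventually.of_forall fun u => Measure.ae_ne _ (αstar u))

lemma ae_pos_on_firstBest_and_neg_off (hf : IsDensityOn f abar) (hg : IsDensityOn g ubar)
    (ht : IsCutoff t αstar) (v : ℝ) :
    ∀ᵐ p ∂typeLaw f g, (p ∈ firstBest αstar v → 0 < min v (t p.2 p.1) - p.1) ∧
      (p ∉ firstBest αstar v → min v (t p.2 p.1) - p.1 < 0) := by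
  filter_upwards [ae_typeLaw_mem hf hg, ae_ne_cutoff f g ht.monotone.measurable,
    Measure.quasiMeasurePreserving_fst.ae (Measure.ae_ne (law g) v)] with p ⟨hu, hα⟩ hcut hv
  refine ⟨fun h => sub_pos.2 (lt_min (h.2.2.lt_of_ne hv) (ht.lt_interference _ _ hu.1 h.2.1)),
    fun h => sub_neg.2 (min_lt_iff.2 ?_)⟩
  by_contra! hle
  refine h ⟨hα.1, lt_of_not_ge fun hge => ?_, hle.1⟩
  exact (ht.interference_lt _ _ hu.1 (hge.lt_of_ne hcut)).not_ge hle.2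

lemma integrable_objective (hf : IsDensityOn f abar) (hg : IsDensityOn g ubar)
    (ht : Continuous (Function.uncurry t)) (v : ℝ) (ha : Measurable (Function.uncurry a))
    (hmem : ∀ α u, a α u ∈ Icc (0 : ℝ) 1) :
    Integrable (fun p : ℝ × ℝ => (min v (t p.2 p.1) - p.1) * a p.2 p.1) (typeLaw f g) :=
  integrable_mul_of_mem_Icc
    (integrable_typeLaw_of_continuousOn hf hg
      (((continuous_const.min (ht.comp continuous_swap)).sub continuous_fst).continuousOn))
    (ha.comp measurable_swap) fun _ => hmem _ _

lemma J_eq_integral_typeLaw (hf : IsDensityOn f abar) (hg : IsDensityOn g ubar)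
    (hint : Integrable (fun p : ℝ × ℝ => (min v (t p.2 p.1) - p.1) * a p.2 p.1) (typeLaw f g)) :
    J abar ubar v f g t a = ∫ p, (min v (t p.2 p.1) - p.1) * a p.2 p.1 ∂typeLaw f g := by
  rw [integral_typeLaw hf hg hint]
  simp only [J, mul_assoc]

/-- `a'` is at least as close as `a` to allocating exactly on the first-best region. -/
def IsCloserToFirstBest (αstar : ℝ → ℝ) (v : ℝ) (a' a : ℝ → ℝ → ℝ) : Prop :=
  ∀ α u, ((u, α) ∈ firstBest αstar v → a α u ≤ a' α u) ∧
    ((u, α) ∉ firstBest αstar v → a' α u ≤ a α u)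

lemma IsCloserToFirstBest.ae_eq_of_J_le (h : IsCloserToFirstBest αstar v a' a)
    (hf : IsDensityOn f abar) (hg : IsDensityOn g ubar) (ht : IsCutoff t αstar)
    (ha : Measurable (Function.uncurry a)) (hmem : ∀ α u, a α u ∈ Icc (0 : ℝ) 1)
    (ha' : Measurable (Function.uncurry a')) (hmem' : ∀ α u, a' α u ∈ Icc (0 : ℝ) 1)
    (hJ : J abar ubar v f g t a' ≤ J abar ubar v f g t a) :
    ∀ᵐ p ∂typeLaw f g, a' p.2 p.1 = a p.2 p.1 := by
  have hsign := ae_pos_on_firstBest_and_neg_off hf hg ht v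
  have hint := integrable_objective hf hg ht.continuous v ha hmem
  have hint' := integrable_objective hf hg ht.continuous v ha' hmem'
  rw [J_eq_integral_typeLaw hf hg hint, J_eq_integral_typeLaw hf hg hint'] at hJ
  have hle : ∀ᵐ p ∂typeLaw f g,
      (min v (t p.2 p.1) - p.1) * a p.2 p.1 ≤ (min v (t p.2 p.1) - p.1) * a' p.2 p.1 := by
    filter_upwards [hsign] with p hp
    by_cases hmem : p ∈ firstBest αstar v
    · exact mul_le_mul_of_nonneg_left ((h _ _).1 hmem) (hp.1 hmem).le
    · exact mul_le_mul_of_nonpos_left ((h _ _).2 hmem) (hp.2 hmem).le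
  have heq := (integral_eq_iff_of_ae_le hint hint' hle).1
    ((integral_mono_ae hint hint' hle).antisymm hJ)
  filter_upwards [hsign, heq] with p hp hpeq
  refine (mul_left_cancel₀ ?_ hpeq).symm
  by_cases hmem : p ∈ firstBest αstar v
  · exact (hp.1 hmem).ne'
  · exact (hp.2 hmem).ne

end FirstBest

section FirstBestIntegral

variable {abar ubar v : ℝ} {f g : ℝ → ℝ} {αstar : ℝ → ℝ}

lemma setIntegral_firstBest (hf : IsDensityOn f abar) (hg : IsDensityOn g ubar) (hv : 0 ≤ v)
    (hα : Measurable αstar) (hpos : ∀ u, 0 < u → 0 < αstar u) {φ : ℝ → ℝ}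
    (hφ : Integrable (fun p : ℝ × ℝ => φ p.1) (typeLaw f g)) :
    ∫ p in firstBest αstar v, φ p.1 ∂typeLaw f g
      = ∫ u in (0 : ℝ)..v, (1 - CDF f (αstar u)) * (g u * φ u) := by
  have hmeas := measurableSet_firstBest hα v
  have hslice : ∀ u, 0 < u →
      ∫ α, (firstBest αstar v).indicator (fun p => φ p.1) (u, α) ∂law f
        = (Iic v).indicator (fun u => (1 - CDF f (αstar u)) * φ u) u := by
    intro u hu
    by_cases huv : u ≤ v
    · have hfiber : (fun α => (firstBest αstar v).indicator (fun p => φ p.1) (u, α))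
          = (Ioi (αstar u)).indicator fun _ => φ u := by
        ext α
        have : (u, α) ∈ firstBest αstar v ↔ α ∈ Ioi (αstar u) :=
          ⟨fun h => h.2.1, fun h => ⟨(hpos u hu).trans h, h, huv⟩⟩
        simp only [indicator, this]
      rw [hfiber, integral_indicator_const _ measurableSet_Ioi,
        indicator_of_mem (mem_Iic.2 huv), hf.one_sub_CDF (hpos u hu).le, smul_eq_mul]
    · have hfiber : ∀ α, (u, α) ∉ firstBest αstar v := fun α h => huv h.2.2
      simp only [indicator_of_notMem (hfiber _), integral_zero,
        indicator_of_notMem (notMem_Iic.2 (not_le.1 huv))]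
  calc ∫ p in firstBest αstar v, φ p.1 ∂typeLaw f g
      = ∫ u, ∫ α, (firstBest αstar v).indicator (fun p => φ p.1) (u, α) ∂law f ∂law g := by
        rw [← integral_indicator hmeas, integral_prod _ (hφ.indicator hmeas)]
    _ = ∫ u in Iic v, (1 - CDF f (αstar u)) * φ u ∂law g := by
        rw [← integral_indicator measurableSet_Iic]
        exact integral_congr_ae (hg.ae_mem_Ioc.mono fun u hu => hslice u hu.1)
    _ = ∫ u in (0 : ℝ)..v, (1 - CDF f (αstar u)) * (g u * φ u) := by
        rw [hg.setIntegral_law_Iic hv]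
        simp only [mul_left_comm]

lemma Klow_eq (hf : IsDensityOn f abar) (hg : IsDensityOn g ubar) (hv : 0 ≤ v)
    (hα : Measurable αstar) (hpos : ∀ u, 0 < u → 0 < αstar u) :
    Klow f g αstar v = (∫ p in firstBest αstar v, rFun g p.1 ∂typeLaw f g)
      / (typeLaw f g).real (firstBest αstar v) := by
  have := hf.isProbabilityMeasure_law
  have := hg.isProbabilityMeasure_law
  have hden := setIntegral_firstBest (φ := fun _ => 1) hf hg hv hα hpos (integrable_const 1)
  simp only [integral_const, measureReal_restrict_apply_univ, smul_eq_mul, mul_one] at hden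
  rw [Klow, hden, setIntegral_firstBest hf hg hv hα hpos (integrable_rFun hf hg)]
  congr 1
  refine intervalIntegral.integral_congr fun u hu => ?_
  rw [uIcc_of_le hv] at hu
  simp only [hg.mul_rFun hu.1]

lemma setIntegral_firstBest_rFun_le {K : ℝ} (hf : IsDensityOn f abar) (hg : IsDensityOn g ubar)
    (hv : 0 ≤ v) (hα : Measurable αstar) (hpos : ∀ u, 0 < u → 0 < αstar u)
    (hK : Klow f g αstar v ≤ K) :
    ∫ p in firstBest αstar v, rFun g p.1 ∂typeLaw f g
      ≤ K * (typeLaw f g).real (firstBest αstar v) := by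
  have := hf.isProbabilityMeasure_law
  have := hg.isProbabilityMeasure_law
  rw [Klow_eq hf hg hv hα hpos] at hK
  rcases measureReal_nonneg.eq_or_lt' (a := (typeLaw f g).real (firstBest αstar v)) with h0 | hlt
  · rw [h0, mul_zero, setIntegral_measure_zero _ ((measureReal_eq_zero_iff).1 h0)]
  · exact (div_le_iff₀ hlt).1 hK

end FirstBestIntegral


open Classical in
/-- The allocation granting everything on the first-best region and the type-independent level `b u`
elsewhere. -/
def firstBestAlloc (αstar : ℝ → ℝ) (v : ℝ) (b : ℝ → ℝ) (α u : ℝ) : ℝ :=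
  if (u, α) ∈ firstBest αstar v then 1 else b u

open Classical in
/-- The least inspection making `firstBestAlloc` incentive compatible. -/
def firstBestInspect (αstar : ℝ → ℝ) (v : ℝ) (b : ℝ → ℝ) (α u : ℝ) : ℝ :=
  if (u, α) ∈ firstBest αstar v then 1 - b u else 0

/-- The rule following `a'` on types `α ≤ s` and `a` on types `α > s`. -/
def splice (s : ℝ) (a' a : ℝ → ℝ → ℝ) (α u : ℝ) : ℝ := if α ≤ s then a' α u else a α u

section Rules

variable {v s : ℝ} {αstar b : ℝ → ℝ} {a c a' c' : ℝ → ℝ → ℝ}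

lemma firstBestAlloc_zero (αstar : ℝ → ℝ) (v : ℝ) (b : ℝ → ℝ) (u : ℝ) :
    firstBestAlloc αstar v b 0 u = b u :=
  if_neg (zero_notMem_firstBest αstar v u)

lemma admissible_firstBest (hα : Monotone αstar) (hb : Measurable b) (hanti : Antitone b)
    (hmem : ∀ u, b u ∈ Icc (0 : ℝ) 1) :
    Admissible (firstBestAlloc αstar v b) (firstBestInspect αstar v b) where
  meas_a := Measurable.ite (measurable_swap (measurableSet_firstBest hα.measurable v))
    measurable_const (hb.comp measurable_snd)
  meas_c := Measurable.ite (measurable_swap (measurableSet_firstBest hα.measurable v))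
    ((hb.comp measurable_snd).const_sub 1) measurable_const
  mem_a α u := by
    unfold firstBestAlloc
    split_ifs
    exacts [⟨zero_le_one, le_rfl⟩, hmem u]
  mem_c α u := by
    unfold firstBestInspect
    split_ifs
    exacts [Icc.mem_iff_one_sub_mem.1 (hmem u), ⟨le_rfl, zero_le_one⟩]
  ic α u := by
    rw [firstBestAlloc_zero]
    unfold firstBestAlloc firstBestInspect
    split_ifs <;> linarith
  inspect α u := by
    unfold firstBestAlloc firstBestInspect
    split_ifs <;> linarith [(hmem u).1]
  u_mono α u u' hu := by
    unfold firstBestAlloc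
    split_ifs with h h'
    exacts [le_rfl, absurd (firstBest_of_le hα hu h) h', (hmem u).2, hanti hu]
  α_mono0 α u := by
    rw [firstBestAlloc_zero]
    unfold firstBestAlloc
    split_ifs
    exacts [(hmem u).2, le_rfl]

lemma measurable_splice (ha' : Measurable (Function.uncurry a'))
    (ha : Measurable (Function.uncurry a)) : Measurable (Function.uncurry (splice s a' a)) :=
  Measurable.ite (measurableSet_le measurable_fst measurable_const) ha' ha

protected lemma Admissible.splice (h' : Admissible a' c') (h : Admissible a c)
    (h0 : ∀ u, a' 0 u = a 0 u) (s : ℝ) :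
    Admissible (splice s a' a) (splice s c' c) := by
  have hzero : ∀ u, splice s a' a 0 u = a 0 u := fun u => by
    simp only [splice, h0, ite_self]
  refine ⟨measurable_splice h'.meas_a h.meas_a, measurable_splice h'.meas_c h.meas_c,
    fun α u => ?_, fun α u => ?_, fun α u => ?_, fun α u => ?_, fun α u u' hu => ?_,
    fun α u => ?_⟩
  all_goals
    try rw [hzero]
    unfold splice
    split_ifs
  exacts [h'.mem_a α u, h.mem_a α u, h'.mem_c α u, h.mem_c α u, (h'.ic α u).trans_eq (h0 u),
    h.ic α u, h'.inspect α u, h.inspect α u, h'.u_mono α u u' hu, h.u_mono α u u' hu,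
    (h0 u).symm.trans_le (h'.α_mono0 α u), h.α_mono0 α u]

lemma Admissible.isCloser_firstBestAlloc (h : Admissible a c) (hb : ∀ u, b u ≤ a 0 u) :
    IsCloserToFirstBest αstar v (firstBestAlloc αstar v b) a := fun α u =>
  ⟨fun hp => (h.mem_a α u).2.trans_eq (if_pos hp).symm,
    fun hp => (if_neg hp).trans_le ((hb u).trans (h.α_mono0 α u))⟩

protected lemma IsCloserToFirstBest.splice (h : IsCloserToFirstBest αstar v a' a) (s : ℝ) :
    IsCloserToFirstBest αstar v (splice s a' a) a := by
  intro α u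
  unfold splice
  split_ifs
  exacts [h α u, ⟨fun _ => le_rfl, fun _ => le_rfl⟩]

-- Where full allocation is forced, incentive compatibility alone bounds inspection from below.
lemma Admissible.firstBestInspect_le (h : Admissible a c) {α u : ℝ}
    (hb : firstBestAlloc αstar v b α u = a α u) (hu : a 0 u ≤ b u) :
    firstBestInspect αstar v b α u ≤ c α u := by
  unfold firstBestInspect
  split_ifs with hp
  · have hic := h.ic α u
    rw [← hb, firstBestAlloc, if_pos hp] at hic
    linarith
  · exact (h.mem_c α u).1

lemma continuousAt_splice (a' a : ℝ → ℝ → ℝ) {α s : ℝ} (hα : α ≠ s) (u : ℝ) :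
    ContinuousAt (fun s => splice s a' a α u) s := by
  rcases hα.lt_or_gt with hlt | hgt
  · exact continuousAt_const.congr ((lt_mem_nhds hlt).mono fun _ hs => (if_pos hs.le).symm)
  · exact continuousAt_const.congr ((gt_mem_nhds hgt).mono fun _ hs => (if_neg hs.not_ge).symm)

end Rules

section Deformation

variable {abar ubar v K : ℝ} {f g : ℝ → ℝ} {t a c : ℝ → ℝ → ℝ} {αstar b : ℝ → ℝ}

-- Every `u > 0` has a slice of positive measure off the first-best region.
lemma ae_le_of_firstBestAlloc_ae_eq (hf : IsDensityOn f abar) (hg : IsDensityOn g ubar)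
    (hpos : ∀ u, 0 < u → 0 < αstar u) (h : Admissible a c)
    (hb : ∀ᵐ p ∂typeLaw f g, firstBestAlloc αstar v b p.2 p.1 = a p.2 p.1) :
    ∀ᵐ p ∂typeLaw f g, a 0 p.1 ≤ b p.1 := by
  refine Measure.quasiMeasurePreserving_fst.ae (p := fun u => a 0 u ≤ b u) ?_
  filter_upwards [Measure.ae_ae_of_ae_prod hb, hg.ae_mem_Ioc] with u hslice hu
  obtain ⟨α, hα, heq⟩ := ((hf.frequently_lt (hpos u hu.1)).and_eventually hslice).exists
  rw [firstBestAlloc, if_neg fun hp => hα.not_gt hp.2.1] at heq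
  exact (h.α_mono0 α u).trans_eq heq.symm

-- By optimality a feasible improvement agrees with `a` almost everywhere, hence inherits at least
-- the surplus of `a`. The surplus along the path therefore skips `[0, surplus K f g a c)` and,
-- being continuous, cannot become negative.
lemma OptimalRelaxed.ae_eq_of_path (hopt : OptimalRelaxed abar ubar v K f g t a c)
    (hf : IsDensityOn f abar) (hg : IsDensityOn g ubar) (ht : IsCutoff t αstar) (hK : 0 ≤ K)
    (hslack : 0 < surplus K f g a c) {A C : ℝ → ℝ → ℝ → ℝ} {x y : ℝ} (hxy : x ≤ y)
    (hadm : ∀ s ∈ Icc x y, Admissible (A s) (C s))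
    (hcloser : ∀ s ∈ Icc x y, IsCloserToFirstBest αstar v (A s) a)
    (hcont : ∀ s ∈ Icc x y, ∀ᵐ p ∂typeLaw f g,
      ContinuousWithinAt (fun s => A s p.2 p.1) (Icc x y) s ∧
        ContinuousWithinAt (fun s => C s p.2 p.1) (Icc x y) s)
    (hstart : ∀ᵐ p ∂typeLaw f g, A x p.2 p.1 = a p.2 p.1)
    (hcost : ∀ s ∈ Icc x y, (∀ᵐ p ∂typeLaw f g, A s p.2 p.1 = a p.2 p.1) →
      ∀ᵐ p ∂typeLaw f g, C s p.2 p.1 ≤ c p.2 p.1) :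
    ∀ᵐ p ∂typeLaw f g, A y p.2 p.1 = a p.2 p.1 := by
  have hadm₀ := ((feasibleRelaxed_iff hf hg).1 hopt.1).1
  have hge : ∀ s ∈ Icc x y, (∀ᵐ p ∂typeLaw f g, A s p.2 p.1 = a p.2 p.1) →
      0 < surplus K f g (A s) (C s) := fun s hs heq =>
    hslack.trans_le (surplus_le_of_ae hf hg hK hadm₀ (hadm s hs) heq (hcost s hs heq))
  have heq : ∀ s ∈ Icc x y, 0 ≤ surplus K f g (A s) (C s) →
      ∀ᵐ p ∂typeLaw f g, A s p.2 p.1 = a p.2 p.1 := fun s hs hsur =>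
    (hcloser s hs).ae_eq_of_J_le hf hg ht hadm₀.meas_a hadm₀.mem_a (hadm s hs).meas_a
      (hadm s hs).mem_a (hopt.2 _ _ ((feasibleRelaxed_iff hf hg).2 ⟨hadm s hs, hsur⟩))
  refine heq y (right_mem_Icc.2 hxy) (le_of_not_gt fun hneg => ?_)
  obtain ⟨s, hs, hzero⟩ := intermediate_value_Icc' hxy (continuousOn_surplus hf hg hadm hcont)
    ⟨hneg.le, (hge x (left_mem_Icc.2 hxy) hstart).le⟩
  exact (hge s hs (heq s hs hzero.ge)).ne' hzero

lemma OptimalRelaxed.firstBestAlloc_ae_eq (hopt : OptimalRelaxed abar ubar v K f g t a c)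
    (hf : IsDensityOn f abar) (hg : IsDensityOn g ubar) (ht : IsCutoff t αstar) (hK : 0 ≤ K)
    (hslack : 0 < surplus K f g a c) :
    ∀ᵐ p ∂typeLaw f g, firstBestAlloc αstar v (a 0) p.2 p.1 = a p.2 p.1 := by
  have h := ((feasibleRelaxed_iff hf hg).1 hopt.1).1
  have h' : Admissible (firstBestAlloc αstar v (a 0)) (firstBestInspect αstar v (a 0)) :=
    admissible_firstBest ht.monotone h.meas_a.of_uncurry_left (fun _ _ => h.u_mono 0 _ _)
      (h.mem_a 0)
  have hmem := ae_typeLaw_mem hf hg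
  have hpath := hopt.ae_eq_of_path hf hg ht hK hslack hf.bound_pos.le
    (A := fun s => splice s (firstBestAlloc αstar v (a 0)) a)
    (C := fun s => splice s (firstBestInspect αstar v (a 0)) c)
    (fun s _ => h'.splice h (firstBestAlloc_zero αstar v (a 0)) s)
    (fun s _ => (h.isCloser_firstBestAlloc fun _ => le_rfl).splice s)
    (fun s _ => by
      filter_upwards [Measure.quasiMeasurePreserving_snd.ae (Measure.ae_ne (law f) s)] with p hp
      exact ⟨(continuousAt_splice _ _ hp _).continuousWithinAt,
        (continuousAt_splice _ _ hp _).continuousWithinAt⟩)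
    (by
      filter_upwards [hmem] with p hp using if_neg hp.2.1.not_ge)
    (fun s _ heq => by
      filter_upwards [heq] with p hp
      unfold splice at hp ⊢
      split_ifs at hp ⊢
      exacts [h.firstBestInspect_le hp le_rfl, le_rfl])
  filter_upwards [hpath, hmem] with p hp hpmem
  rwa [splice, if_pos hpmem.2.2] at hp

lemma OptimalRelaxed.firstBestAlloc_zero_ae_eq (hopt : OptimalRelaxed abar ubar v K f g t a c)
    (hf : IsDensityOn f abar) (hg : IsDensityOn g ubar) (ht : IsCutoff t αstar) (hK : 0 ≤ K)
    (hslack : 0 < surplus K f g a c) :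
    ∀ᵐ p ∂typeLaw f g, firstBestAlloc αstar v 0 p.2 p.1 = a p.2 p.1 := by
  have h := ((feasibleRelaxed_iff hf hg).1 hopt.1).1
  have hscale : ∀ l ∈ Icc (0 : ℝ) 1, ∀ u, (1 - l) * a 0 u ≤ a 0 u := fun l hl u =>
    mul_le_of_le_one_left (h.mem_a 0 u).1 (sub_le_self 1 hl.1)
  have hadm : ∀ l ∈ Icc (0 : ℝ) 1, Admissible (firstBestAlloc αstar v fun u => (1 - l) * a 0 u)
      (firstBestInspect αstar v fun u => (1 - l) * a 0 u) := fun l hl =>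
    admissible_firstBest ht.monotone (h.meas_a.of_uncurry_left.const_mul _)
      (fun _ _ hu => mul_le_mul_of_nonneg_left (h.u_mono 0 _ _ hu) (sub_nonneg.2 hl.2))
      fun u => ⟨mul_nonneg (sub_nonneg.2 hl.2) (h.mem_a 0 u).1,
        (hscale l hl u).trans (h.mem_a 0 u).2⟩
  have hpath := hopt.ae_eq_of_path hf hg ht hK hslack zero_le_one hadm
    (fun l hl => h.isCloser_firstBestAlloc (hscale l hl))
    (fun l _ => Filter.Eventually.of_forall fun p => by
      unfold firstBestAlloc firstBestInspect
      split_ifs <;> exact ⟨by fun_prop, by fun_prop⟩)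
    (by simpa only [sub_zero, one_mul] using hopt.firstBestAlloc_ae_eq hf hg ht hK hslack)
    (fun l _ heq => by
      filter_upwards [heq, ae_le_of_firstBestAlloc_ae_eq hf hg ht.pos h heq] with p hp hle
      exact h.firstBestInspect_le hp hle)
  simpa only [sub_self, zero_mul, Pi.zero_def] using hpath

end Deformation

lemma surplus_firstBest_le {abar ubar v K : ℝ} {f g αstar : ℝ → ℝ} (hf : IsDensityOn f abar)
    (hg : IsDensityOn g ubar) (hv : 0 ≤ v) (hα : Measurable αstar)
    (hpos : ∀ u, 0 < u → 0 < αstar u) (hK : Klow f g αstar v ≤ K) :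
    surplus K f g (firstBestAlloc αstar v 0) (firstBestInspect αstar v 0) ≤ 0 := by
  have := hf.isProbabilityMeasure_law
  have := hg.isProbabilityMeasure_law
  have hmeas := measurableSet_firstBest hα v
  calc surplus K f g (firstBestAlloc αstar v 0) (firstBestInspect αstar v 0)
      = ∫ p in firstBest αstar v, (rFun g p.1 - K) ∂typeLaw f g := by
        rw [surplus, ← integral_indicator hmeas]
        congr 1 with p
        by_cases hp : p ∈ firstBest αstar v <;>
          simp [firstBestAlloc, firstBestInspect, hp]
    _ = ∫ p in firstBest αstar v, rFun g p.1 ∂typeLaw f g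
          - K * (typeLaw f g).real (firstBest αstar v) := by
        rw [integral_sub (integrable_rFun hf hg).integrableOn (integrable_const K),
          setIntegral_const, smul_eq_mul, mul_comm K]
    _ ≤ 0 := sub_nonpos.2 (setIntegral_firstBest_rFun_le hf hg hv hα hpos hK)

theorem relaxed_budget_binds_general {abar ubar v K : ℝ} (hv : 0 < v) (hK0 : 0 ≤ K)
    {f g : ℝ → ℝ} {t : ℝ → ℝ → ℝ} {αstar : ℝ → ℝ} (hf : IsDensityOn f abar)
    (hg : IsDensityOn g ubar) (ht : IsCutoff t αstar) (hK : Klow f g αstar v ≤ K)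
    {a c : ℝ → ℝ → ℝ} (hopt : OptimalRelaxed abar ubar v K f g t a c) :
    (∫ u in (0 : ℝ)..ubar, ∫ α in (0 : ℝ)..abar, f α * g u * rFun g u * a α u)
      = K * ∫ u in (0 : ℝ)..ubar, ∫ α in (0 : ℝ)..abar, f α * g u * c α u := by
  obtain ⟨hadm, hnonneg⟩ := (feasibleRelaxed_iff hf hg).1 hopt.1
  suffices hle : surplus K f g a c ≤ 0 from
    sub_eq_zero.1 ((hadm.surplus_eq hf hg).symm.trans (hle.antisymm hnonneg))
  by_contra! hslack
  have heq := hopt.firstBestAlloc_zero_ae_eq hf hg ht hK0 hslack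
  have hfb : Admissible (firstBestAlloc αstar v 0) (firstBestInspect αstar v 0) :=
    admissible_firstBest ht.monotone measurable_const antitone_const
      fun _ => ⟨le_rfl, zero_le_one⟩
  have hcost : ∀ᵐ p ∂typeLaw f g, firstBestInspect αstar v 0 p.2 p.1 ≤ c p.2 p.1 := by
    filter_upwards [heq, ae_le_of_firstBestAlloc_ae_eq hf hg ht.pos hadm heq] with p hp hle
    exact hadm.firstBestInspect_le hp hle
  have hsur := surplus_le_of_ae hf hg hK0 hadm hfb heq hcost
  exact hslack.not_ge (hsur.trans
    (surplus_firstBest_le hf hg hv.le ht.monotone.measurable ht.pos hK))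

/-- if `K ≥ K_low`, the budget constraint holds with equality at an
optimal solution of the relaxed problem. -/
theorem relaxed_budget_binds
    (abar ubar v K : ℝ) (habar : 0 < abar) (hubar : 0 < ubar) (hv : 0 < v) (hK0 : 0 ≤ K)
    (f g : ℝ → ℝ) (t : ℝ → ℝ → ℝ) (αstar : ℝ → ℝ)
    (hf : IsDensityOn f abar) (hg : IsDensityOn g ubar)
    (hr : StrictAntiOn (rFun g) (Icc 0 ubar))
    (ht : InterferenceSpec t αstar)
    (hK : Klow f g αstar v ≤ K)
    (a c : ℝ → ℝ → ℝ)
    (hopt : OptimalRelaxed abar ubar v K f g t a c) :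
    (∫ u in (0:ℝ)..ubar, ∫ α in (0:ℝ)..abar, f α * g u * rFun g u * a α u)
      = K * ∫ u in (0:ℝ)..ubar, ∫ α in (0:ℝ)..abar, f α * g u * c α u :=
  relaxed_budget_binds_general hv hK0 hf hg ht.isCutoff hK hopt

end Spectrum
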